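/- Let X be a nonempty compact metric space, T : X → X continuous, and Φ = (φ_n)_{n≥1} almost additive on (X,T) with values in ℝ^d. Then the set L_Φ := {Φ_*(μ) : μ ∈ M(X,T)} ⊆ ℝ^d is compact and convex. -/

import Mathlib

open MeasureTheory Filter Topology

/-!
The integrals of an almost additive sequence against an invariant probability measure `μ` form a
quasi-additive sequence `a n = ∫ φ n ∂μ`, with a constant `C` that does not depend on `μ`. Comparing
`a n / n` and `a m / m` with `a (m * n) / (m * n)` shows that `a n / n` converges to its limit
`Φ_* μ` at rate `C / n`. Hence the weakly continuous maps `μ ↦ a n / n` converge to `Φ_*` uniformly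
on the weakly compact set of invariant probability measures, so `Φ_*` is continuous there and its
range is compact. The range is convex because the invariant measures form a convex set on which
`Φ_*` is affine.
-/

section QuasiAdditive

variable {E : Type*} [NormedAddCommGroup E] {a : ℕ → E} {C : ℝ}

/-- A sequence of vectors is quasi-additive if its additivity defect has norm at most `C`. The index
`0` is excluded, as in the indexing of almost additive sequences from `1`. -/
def QuasiAdditiveWith (C : ℝ) (a : ℕ → E) : Prop :=
  ∀ n p : ℕ, 1 ≤ n → 1 ≤ p → ‖a (n + p) - a n - a p‖ ≤ C

namespace QuasiAdditiveWith

theorem nonneg (ha : QuasiAdditiveWith C a) : 0 ≤ C :=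
  (norm_nonneg _).trans (ha 1 1 le_rfl le_rfl)

variable [NormedSpace ℝ E]

theorem norm_mul_sub_smul_le (ha : QuasiAdditiveWith C a) {m n : ℕ} (hm : 1 ≤ m) (hn : 1 ≤ n) :
    ‖a (m * n) - (m : ℝ) • a n‖ ≤ m * C := by
  induction m, hm using Nat.le_induction with
  | base => simpa using ha.nonneg
  | succ m hm ih =>
    have split_defect : a ((m + 1) * n) - ((m + 1 : ℕ) : ℝ) • a n
        = (a (m * n + n) - a (m * n) - a n) + (a (m * n) - (m : ℝ) • a n) := by
      rw [Nat.succ_mul, Nat.cast_succ, add_smul, one_smul]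
      abel
    calc ‖a ((m + 1) * n) - ((m + 1 : ℕ) : ℝ) • a n‖
        ≤ ‖a (m * n + n) - a (m * n) - a n‖ + ‖a (m * n) - (m : ℝ) • a n‖ := by
          rw [split_defect]
          exact norm_add_le _ _
      _ ≤ C + m * C := add_le_add (ha _ _ (Nat.mul_pos hm hn) hn) ih
      _ = (m + 1 : ℕ) * C := by
          push_cast
          ring

theorem norm_average_mul_sub_average_le (ha : QuasiAdditiveWith C a) {m n : ℕ} (hm : 1 ≤ m)
    (hn : 1 ≤ n) :
    ‖(1 / ((m * n : ℕ) : ℝ)) • a (m * n) - (1 / (n : ℝ)) • a n‖ ≤ C / n := by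
  have : (0 : ℝ) < m := by exact_mod_cast hm
  have factor : (1 / ((m * n : ℕ) : ℝ)) • a (m * n) - (1 / (n : ℝ)) • a n
      = (1 / ((m * n : ℕ) : ℝ)) • (a (m * n) - (m : ℝ) • a n) := by
    rw [smul_sub, smul_smul]
    congr 2
    push_cast
    field_simp
  calc ‖(1 / ((m * n : ℕ) : ℝ)) • a (m * n) - (1 / (n : ℝ)) • a n‖
      = 1 / ((m * n : ℕ) : ℝ) * ‖a (m * n) - (m : ℝ) • a n‖ := by
        rw [factor, norm_smul, Real.norm_of_nonneg (by positivity)]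
    _ ≤ 1 / ((m * n : ℕ) : ℝ) * (m * C) := by
        gcongr
        exact ha.norm_mul_sub_smul_le hm hn
    _ = C / n := by
        push_cast
        field_simp

theorem norm_average_sub_average_le (ha : QuasiAdditiveWith C a) {m n : ℕ} (hm : 1 ≤ m)
    (hn : 1 ≤ n) :
    ‖(1 / (m : ℝ)) • a m - (1 / (n : ℝ)) • a n‖ ≤ C / m + C / n := by
  refine (norm_sub_le_norm_sub_add_norm_sub _ ((1 / ((m * n : ℕ) : ℝ)) • a (m * n)) _).trans
    (add_le_add ?_ (ha.norm_average_mul_sub_average_le hm hn))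
  rw [norm_sub_rev, mul_comm m n]
  exact ha.norm_average_mul_sub_average_le hn hm

theorem cauchySeq_average (ha : QuasiAdditiveWith C a) :
    CauchySeq fun n : ℕ => (1 / (n : ℝ)) • a n := by
  have bound_tendsto : Tendsto (fun k : ℕ × ℕ => C / k.1 + C / k.2) atTop (𝓝 0) := by
    have h := tendsto_const_div_atTop_nhds_zero_nat C
    rw [← prod_atTop_atTop_eq]
    simpa using (h.comp tendsto_fst).add (h.comp tendsto_snd)
  refine cauchySeq_iff_tendsto_dist_atTop_0.2
    (squeeze_zero' (Eventually.of_forall fun _ => dist_nonneg) ?_ bound_tendsto)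
  filter_upwards [eventually_ge_atTop (1, 1)] with k hk
  rw [dist_eq_norm]
  exact ha.norm_average_sub_average_le hk.1 hk.2

theorem norm_average_sub_le_of_tendsto (ha : QuasiAdditiveWith C a) {l : E}
    (hl : Tendsto (fun n : ℕ => (1 / (n : ℝ)) • a n) atTop (𝓝 l)) {n : ℕ} (hn : 1 ≤ n) :
    ‖(1 / (n : ℝ)) • a n - l‖ ≤ C / n := by
  have bound_tendsto : Tendsto (fun m : ℕ => C / n + C / m) atTop (𝓝 (C / n)) := by
    simpa using (tendsto_const_div_atTop_nhds_zero_nat C).const_add (C / n)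
  refine le_of_tendsto_of_tendsto (hl.const_sub _).norm bound_tendsto ?_
  filter_upwards [eventually_ge_atTop 1] with m hm
  exact ha.norm_average_sub_average_le hn hm

end QuasiAdditiveWith

end QuasiAdditive

section AlmostAdditive

variable {X E : Type*} [NormedAddCommGroup E] {T : X → X} {φ : ℕ → X → E} {C : ℝ}

/-- Almost additivity with constant `C`, over the map `T`, of a sequence of vector-valued functions
indexed from `1`. The defect is bounded in norm; for real-valued functions this is the usual pair of
inequalities, see `almostAdditiveWith_real_iff`. -/
def AlmostAdditiveWith (C : ℝ) (T : X → X) (φ : ℕ → X → E) : Prop :=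
  ∀ n p : ℕ, 1 ≤ n → 1 ≤ p → ∀ x : X, ‖φ (n + p) x - φ n x - φ p (T^[n] x)‖ ≤ C

theorem almostAdditiveWith_real_iff {ψ : ℕ → X → ℝ} :
    AlmostAdditiveWith C T ψ ↔ ∀ n p : ℕ, 1 ≤ n → 1 ≤ p → ∀ x : X,
      -C + ψ n x + ψ p (T^[n] x) ≤ ψ (n + p) x ∧
        ψ (n + p) x ≤ ψ n x + ψ p (T^[n] x) + C := by
  refine forall₅_congr fun n p _ _ x => ?_
  rw [Real.norm_eq_abs, abs_le]
  constructor <;> rintro ⟨hlower, hupper⟩ <;> constructor <;> linarith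

theorem exists_almostAdditiveWith_of_forall_apply {ι : Type*} [Fintype ι] {F : ι → Type*}
    [∀ j, NormedAddCommGroup (F j)] {ψ : ℕ → X → ∀ j, F j}
    (hψ : ∀ j, ∃ C, AlmostAdditiveWith C T fun n x => ψ n x j) :
    ∃ C, AlmostAdditiveWith C T ψ := by
  choose C hC using hψ
  refine ⟨∑ j, |C j|, fun n p hn hp x => ?_⟩
  refine (pi_norm_le_iff_of_nonneg (Finset.sum_nonneg fun j _ => abs_nonneg (C j))).2 fun j => ?_
  calc ‖ψ (n + p) x j - ψ n x j - ψ p (T^[n] x) j‖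
      ≤ |C j| := (hC j n p hn hp x).trans (le_abs_self _)
    _ ≤ ∑ i, |C i| := Finset.single_le_sum (f := fun i => |C i|)
        (fun i _ => abs_nonneg (C i)) (Finset.mem_univ j)

theorem AlmostAdditiveWith.quasiAdditiveWith_integral [NormedSpace ℝ E] [MeasurableSpace X]
    (hφ : AlmostAdditiveWith C T φ) {μ : Measure X} [IsProbabilityMeasure μ]
    (hT : MeasurePreserving T μ μ) (hint : ∀ n, 1 ≤ n → Integrable (φ n) μ) :
    QuasiAdditiveWith C fun n => ∫ x, φ n x ∂μ := by
  intro n p hn hp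
  have hTn : MeasurePreserving T^[n] μ μ := hT.iterate n
  have hadd : Integrable (φ (n + p)) μ := hint (n + p) (Nat.le_add_right_of_le hn)
  have hcomp : Integrable (fun x => φ p (T^[n] x)) μ :=
    hTn.integrable_comp_of_integrable (hint p hp)
  have integral_comp_iterate : ∫ x, φ p (T^[n] x) ∂μ = ∫ x, φ p x ∂μ := by
    have hmeas : AEStronglyMeasurable (φ p) (μ.map T^[n]) := by
      rw [hTn.map_eq]
      exact (hint p hp).aestronglyMeasurable
    rw [← integral_map hTn.aemeasurable hmeas, hTn.map_eq]
  have integral_defect : ∫ x, φ (n + p) x ∂μ - ∫ x, φ n x ∂μ - ∫ x, φ p x ∂μ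
      = ∫ x, φ (n + p) x - φ n x - φ p (T^[n] x) ∂μ := by
    rw [integral_sub (hadd.sub' (hint n hn)) hcomp, integral_sub hadd (hint n hn),
      integral_comp_iterate]
  rw [integral_defect]
  simpa using norm_integral_le_of_norm_le_const (μ := μ) (Eventually.of_forall (hφ n p hn hp))

end AlmostAdditive

section AsymptoticIntegral

variable {X E : Type*} [MeasurableSpace X] [NormedAddCommGroup E] [NormedSpace ℝ E] {T : X → X}
  {φ : ℕ → X → E} {C : ℝ}

/-- The limit `Φ_* μ` of the averages `(1 / n) ∫ φ n ∂μ`; an unspecified vector when they do not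
converge. -/
noncomputable def asymptoticIntegral (φ : ℕ → X → E) (μ : Measure X) : E :=
  limUnder atTop fun n : ℕ => (1 / (n : ℝ)) • ∫ x, φ n x ∂μ

/-- The set `L_Φ` of the limits `Φ_* μ` over all `T`-invariant probability measures `μ`. Convergence
of the averages is part of the definition, so that no junk value of `asymptoticIntegral` enters. -/
def asymptoticIntegralSet (T : X → X) (φ : ℕ → X → E) : Set E :=
  {α | ∃ μ : Measure X, IsProbabilityMeasure μ ∧ Measure.map T μ = μ ∧
    Tendsto (fun n : ℕ => (1 / (n : ℝ)) • ∫ x, φ n x ∂μ) atTop (𝓝 α)}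

theorem AlmostAdditiveWith.tendsto_asymptoticIntegral [CompleteSpace E]
    (hφ : AlmostAdditiveWith C T φ) {μ : Measure X} [IsProbabilityMeasure μ]
    (hT : MeasurePreserving T μ μ) (hint : ∀ n, 1 ≤ n → Integrable (φ n) μ) :
    Tendsto (fun n : ℕ => (1 / (n : ℝ)) • ∫ x, φ n x ∂μ) atTop (𝓝 (asymptoticIntegral φ μ)) :=
  (hφ.quasiAdditiveWith_integral hT hint).cauchySeq_average.tendsto_limUnder

theorem convex_asymptoticIntegralSet (hT : Measurable T)
    (hint : ∀ n, 1 ≤ n → ∀ μ : Measure X, IsProbabilityMeasure μ → Integrable (φ n) μ) :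
    Convex ℝ (asymptoticIntegralSet T φ) := by
  rintro α ⟨μ, hμ, hTμ, hα⟩ β ⟨ν, hν, hTν, hβ⟩ a b ha hb hab
  refine ⟨ENNReal.ofReal a • μ + ENNReal.ofReal b • ν, ⟨?_⟩, ?_, ?_⟩
  · simp [← ENNReal.ofReal_add ha hb, hab]
  · rw [Measure.map_add _ _ hT, Measure.map_smul, Measure.map_smul, hTμ, hTν]
  · refine ((hα.const_smul a).add (hβ.const_smul b)).congr' ?_
    filter_upwards [eventually_ge_atTop 1] with n hn
    rw [integral_add_measure ((hint n hn μ hμ).smul_measure ENNReal.ofReal_ne_top)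
      ((hint n hn ν hν).smul_measure ENNReal.ofReal_ne_top), integral_smul_measure,
      integral_smul_measure, ENNReal.toReal_ofReal ha, ENNReal.toReal_ofReal hb, smul_add,
      smul_comm a, smul_comm b]

end AsymptoticIntegral

section WeakTopology

theorem continuous_of_forall_dual_of_mem_isCompact {E Y : Type*} [NormedAddCommGroup E]
    [NormedSpace ℝ E] [TopologicalSpace Y] {K : Set E} (hK : IsCompact K) {F : Y → E}
    (hFK : ∀ y, F y ∈ K) (hF : ∀ ℓ : StrongDual ℝ E, Continuous fun y => ℓ (F y)) :
    Continuous F := by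
  have : CompactSpace K := isCompact_iff_compactSpace.1 hK
  let dualEval : K → StrongDual ℝ E → ℝ := fun v ℓ => ℓ v
  have dualEval_injective : Function.Injective dualEval := fun v w hvw =>
    Subtype.ext ((SeparatingDual.eq_iff_forall_dual_eq (R := ℝ)).2 (congrFun hvw))
  have dualEval_embedding : IsClosedEmbedding dualEval :=
    (continuous_pi fun ℓ => ℓ.continuous.comp continuous_subtype_val).isClosedEmbedding
      dualEval_injective
  have continuous_codRestrict : Continuous fun y => (⟨F y, hFK y⟩ : K) :=
    dualEval_embedding.isInducing.continuous_iff.2 (continuous_pi hF)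
  exact continuous_subtype_val.comp continuous_codRestrict

variable {X E : Type*} [TopologicalSpace X] [CompactSpace X] [MeasurableSpace X]
  [NormedAddCommGroup E]

theorem integrable_of_continuous_of_compactSpace [OpensMeasurableSpace X] {f : X → E}
    (hf : Continuous f) (μ : Measure X) [IsFiniteMeasureOnCompacts μ] : Integrable f μ :=
  hf.integrable_of_hasCompactSupport (.of_compactSpace f)

/-- The integrals of `f` all lie in the closed convex hull of its range, which is compact, so their
continuity can be tested against linear functionals. -/
theorem continuous_integral_probabilityMeasure [OpensMeasurableSpace X] [NormedSpace ℝ E]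
    [CompleteSpace E] {f : X → E} (hf : Continuous f) :
    Continuous fun μ : ProbabilityMeasure X => ∫ x, f x ∂(μ : Measure X) := by
  have hint (μ : ProbabilityMeasure X) : Integrable f (μ : Measure X) :=
    integrable_of_continuous_of_compactSpace hf μ
  have hull_compact : IsCompact (closure (convexHull ℝ (Set.range f))) :=
    (isCompact_range hf).totallyBounded.convexHull.closure.isCompact_of_isClosed isClosed_closure
  refine continuous_of_forall_dual_of_mem_isCompact hull_compact (fun μ => ?_) fun ℓ => ?_
  · exact (convex_convexHull ℝ _).closure.integral_mem isClosed_closure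
      (.of_forall fun x => subset_closure (subset_convexHull ℝ _ (Set.mem_range_self x))) (hint μ)
  · simp_rw [← ℓ.integral_comp_comm (hint _)]
    exact ProbabilityMeasure.continuous_integral_continuousMap
      (⟨fun x => ℓ (f x), ℓ.continuous.comp hf⟩ : C(X, ℝ))

end WeakTopology

section InvariantMeasures

variable {X : Type*} [MeasurableSpace X] {T : X → X}

/-- The set `M(X, T)` of `T`-invariant Borel probability measures, inside the space of probability
measures with the topology of weak convergence. -/
def invariantProbabilityMeasures (T : X → X) : Set (ProbabilityMeasure X) :=
  {μ | Measure.map T (μ : Measure X) = μ}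

theorem isClosed_invariantProbabilityMeasures [TopologicalSpace X] [HasOuterApproxClosed X]
    [BorelSpace X] (hT : Continuous T) : IsClosed (invariantProbabilityMeasures T) := by
  have eq_fixedPoints : invariantProbabilityMeasures T = {μ | μ.map hT.aemeasurable = μ} :=
    Set.ext fun μ => ProbabilityMeasure.toMeasure_injective.eq_iff (a := μ.map hT.aemeasurable)
  rw [eq_fixedPoints]
  exact isClosed_eq (ProbabilityMeasure.continuous_map hT) continuous_id

end InvariantMeasures

section Continuity

variable {X E : Type*} [TopologicalSpace X] [CompactSpace X] [MeasurableSpace X] [BorelSpace X]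
  [NormedAddCommGroup E] [NormedSpace ℝ E] [CompleteSpace E] {T : X → X} {φ : ℕ → X → E} {C : ℝ}

theorem AlmostAdditiveWith.tendstoUniformlyOn_asymptoticIntegral (hφ : AlmostAdditiveWith C T φ)
    (hT : Continuous T) (hcont : ∀ n, 1 ≤ n → Continuous (φ n)) :
    TendstoUniformlyOn
      (fun (n : ℕ) (μ : ProbabilityMeasure X) => (1 / (n : ℝ)) • ∫ x, φ n x ∂(μ : Measure X))
      (fun μ => asymptoticIntegral φ μ) atTop (invariantProbabilityMeasures T) := by
  refine Metric.tendstoUniformlyOn_iff.2 fun ε hε => ?_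
  filter_upwards [(tendsto_const_div_atTop_nhds_zero_nat C).eventually_lt_const hε,
    eventually_ge_atTop 1] with n hnε hn μ hμ
  have hTμ : MeasurePreserving T (μ : Measure X) μ := ⟨hT.measurable, hμ⟩
  have hint (k : ℕ) (hk : 1 ≤ k) : Integrable (φ k) (μ : Measure X) :=
    integrable_of_continuous_of_compactSpace (hcont k hk) μ
  rw [dist_comm, dist_eq_norm]
  exact ((hφ.quasiAdditiveWith_integral hTμ hint).norm_average_sub_le_of_tendsto
    (hφ.tendsto_asymptoticIntegral hTμ hint) hn).trans_lt hnε

theorem AlmostAdditiveWith.continuousOn_asymptoticIntegral (hφ : AlmostAdditiveWith C T φ)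
    (hT : Continuous T) (hcont : ∀ n, 1 ≤ n → Continuous (φ n)) :
    ContinuousOn (fun μ : ProbabilityMeasure X => asymptoticIntegral φ μ)
      (invariantProbabilityMeasures T) := by
  refine (hφ.tendstoUniformlyOn_asymptoticIntegral hT hcont).continuousOn (Eventually.frequently ?_)
  filter_upwards [eventually_ge_atTop 1] with n hn
  exact ((continuous_integral_probabilityMeasure (hcont n hn)).const_smul _).continuousOn

theorem AlmostAdditiveWith.image_asymptoticIntegral (hφ : AlmostAdditiveWith C T φ)
    (hT : Continuous T) (hcont : ∀ n, 1 ≤ n → Continuous (φ n)) :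
    (fun μ : ProbabilityMeasure X => asymptoticIntegral φ μ) '' invariantProbabilityMeasures T
      = asymptoticIntegralSet T φ := by
  have htendsto (μ : ProbabilityMeasure X) (hμ : μ ∈ invariantProbabilityMeasures T) :=
    hφ.tendsto_asymptoticIntegral ⟨hT.measurable, hμ⟩ fun n hn =>
      integrable_of_continuous_of_compactSpace (hcont n hn) (μ : Measure X)
  ext α
  constructor
  · rintro ⟨μ, hμ, rfl⟩
    exact ⟨μ, inferInstance, hμ, htendsto μ hμ⟩
  · rintro ⟨μ, hprob, hμ, hα⟩
    exact ⟨⟨μ, hprob⟩, hμ, tendsto_nhds_unique (htendsto ⟨μ, hprob⟩ hμ) hα⟩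

theorem almost_additive_level_set_compact_convex_general [T2Space X] [HasOuterApproxClosed X]
    (hT : Continuous T) (hcont : ∀ n, 1 ≤ n → Continuous (φ n)) (hφ : AlmostAdditiveWith C T φ) :
    IsCompact (asymptoticIntegralSet T φ) ∧ Convex ℝ (asymptoticIntegralSet T φ) := by
  constructor
  · rw [← hφ.image_asymptoticIntegral hT hcont]
    exact (isClosed_invariantProbabilityMeasures hT).isCompact.image_of_continuousOn
      (hφ.continuousOn_asymptoticIntegral hT hcont)
  · exact convex_asymptoticIntegralSet hT.measurable fun n hn μ _ =>
      integrable_of_continuous_of_compactSpace (hcont n hn) μ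

end Continuity

/-- For an `ℝ^d`-valued almost additive sequence `Φ` on a nonempty compact
metric space `(X,T)`, the set `L_Φ = {Φ_*(μ) : μ ∈ M(X,T)}` is compact and convex. -/
theorem almost_additive_level_set_compact_convex
    {X : Type*} [MetricSpace X] [CompactSpace X] [Nonempty X]
    [MeasurableSpace X] [BorelSpace X]
    (T : X → X) (hT : Continuous T)
    (d : ℕ) (φ : ℕ → X → Fin d → ℝ) (hφcont : ∀ n, 1 ≤ n → Continuous (φ n))
    (haa : ∀ j : Fin d, ∃ C : ℝ, 0 < C ∧ ∀ n p : ℕ, 1 ≤ n → 1 ≤ p → ∀ x : X,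
      -C + φ n x j + φ p (T^[n] x) j ≤ φ (n + p) x j ∧
        φ (n + p) x j ≤ φ n x j + φ p (T^[n] x) j + C) :
    IsCompact {α : Fin d → ℝ | ∃ μ : Measure X, IsProbabilityMeasure μ ∧
        Measure.map T μ = μ ∧
        Tendsto (fun n : ℕ => (1 / (n : ℝ)) • ∫ x, φ n x ∂μ) atTop (𝓝 α)} ∧
    Convex ℝ {α : Fin d → ℝ | ∃ μ : Measure X, IsProbabilityMeasure μ ∧
        Measure.map T μ = μ ∧
        Tendsto (fun n : ℕ => (1 / (n : ℝ)) • ∫ x, φ n x ∂μ) atTop (𝓝 α)} := by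
  obtain ⟨C, hC⟩ := exists_almostAdditiveWith_of_forall_apply fun j =>
    (haa j).imp fun _ h => almostAdditiveWith_real_iff.2 h.2
  exact almost_additive_level_set_compact_convex_general hT hφcont hC
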